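/- arXiv:2408.04030 — 2 statements merged into one kernel-verified Lean document; each statement's English description precedes it below -/
import Mathlib

section
/- Let z₀, γ₀ ∈ 𝔻 and γ₁ ∈ ℂ with |γ₁| = 1. Suppose f ∈ ℋ satisfies f(z₀) = γ₀ and H¹f(z₀) = γ₁. Then f''(z₀) = c₂ and f(z) = T_{γ₀}(γ₁·T_{−z₀}(z)) for all z ∈ 𝔻. -/
open Complex Metric

/-- `ℋ`: analytic self-maps of the open unit disk. -/
def Hclass (f : ℂ → ℂ) : Prop :=
  DifferentiableOn ℂ f (ball (0 : ℂ) 1) ∧ Set.MapsTo f (ball (0 : ℂ) 1) (ball (0 : ℂ) 1)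

/-- The Möbius transformation `T_a(z) = (z + a)/(1 + conj(a) z)`. -/
noncomputable def T (a z : ℂ) : ℂ := (z + a) / (1 + (starRingEnd ℂ) a * z)

/-- The (first-order) hyperbolic derivative `H¹f(z) = (1-|z|²)f'(z)/(1-|f(z)|²)`. -/
noncomputable def H1 (f : ℂ → ℂ) (z : ℂ) : ℂ :=
  ((1 - ‖z‖ ^ 2 : ℝ) : ℂ) * deriv f z / ((1 - ‖f z‖ ^ 2 : ℝ) : ℂ)

theorem T_den {a z : ℂ} (ha : ‖a‖ < 1) (hz : ‖z‖ < 1) : 1 + (starRingEnd ℂ) a * z ≠ 0 := by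
  intro h
  have h1 : (starRingEnd ℂ) a * z = -1 := by linear_combination h
  have h2 : ‖a‖ * ‖z‖ = 1 := by
    have := congrArg norm h1
    simpa using this
  nlinarith [norm_nonneg a, norm_nonneg z]

theorem cj (a : ℂ) : ((1 - ‖a‖ ^ 2 : ℝ) : ℂ) = 1 - (starRingEnd ℂ) a * a := by
  rw [Complex.conj_mul']; push_cast; rfl

theorem cj_ne {a : ℂ} (ha : ‖a‖ < 1) : 1 - (starRingEnd ℂ) a * a ≠ 0 := by
  rw [← cj, Complex.ofReal_ne_zero]
  nlinarith [norm_nonneg a]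

theorem T_mem {a z : ℂ} (ha : ‖a‖ < 1) (hz : ‖z‖ < 1) : ‖T a z‖ < 1 := by
  have hd := T_den ha hz
  rw [T, norm_div, div_lt_one (norm_pos_iff.2 hd)]
  have h1 : ‖1 + (starRingEnd ℂ) a * z‖ ^ 2 - ‖z + a‖ ^ 2 = (1 - ‖a‖ ^ 2) * (1 - ‖z‖ ^ 2) := by
    simp only [Complex.sq_norm, Complex.normSq_apply]
    simp
    ring
  have h2 : 0 < (1 - ‖a‖ ^ 2) * (1 - ‖z‖ ^ 2) := by
    apply mul_pos <;> nlinarith [norm_nonneg a, norm_nonneg z]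
  exact lt_of_pow_lt_pow_left₀ 2 (norm_nonneg _) (by linarith)

theorem T_inv {a z : ℂ} (ha : ‖a‖ < 1) (hz : ‖z‖ < 1) : T a (T (-a) z) = z := by
  have ha' : ‖-a‖ < 1 := by simpa using ha
  have h1 := T_den ha' hz
  have h2 := T_den ha (T_mem ha' hz)
  rw [T, div_eq_iff h2, T]
  simp only [map_neg] at h1 ⊢
  generalize (starRingEnd ℂ) a = b at h1 ⊢
  have h3 : (z + -a) / (1 + -b * z) * (1 + -b * z) = z + -a := div_mul_cancel₀ _ h1
  generalize (z + -a) / (1 + -b * z) = q at h3 ⊢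
  linear_combination h3

theorem T_deriv {a z : ℂ} (ha : ‖a‖ < 1) (hz : ‖z‖ < 1) :
    HasDerivAt (T a) ((1 - (starRingEnd ℂ) a * a) / (1 + (starRingEnd ℂ) a * z) ^ 2) z := by
  have h := ((hasDerivAt_id z).add_const a).div
    (((hasDerivAt_id z).const_mul ((starRingEnd ℂ) a)).const_add 1) (T_den ha hz)
  refine h.congr_deriv ?_
  simp only [id]
  congr 1
  ring

/-- Boundary case of the Schwarz-Pick Lemma of second derivative: if `|γ₁| = 1` then
`f''(z₀) = c₂` and `f(z) = T_{γ₀}(γ₁ T_{-z₀}(z))`. -/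
theorem schwarz_pick_second_boundary (z₀ γ₀ γ₁ : ℂ)
    (hz₀ : z₀ ∈ ball (0 : ℂ) 1) (hγ₀ : γ₀ ∈ ball (0 : ℂ) 1) (hγ₁ : ‖γ₁‖ = 1)
    (f : ℂ → ℂ) (hf : Hclass f) (hfz₀ : f z₀ = γ₀) (hH1 : H1 f z₀ = γ₁) :
    iteratedDeriv 2 f z₀ =
      2 * ((1 - ‖γ₀‖ ^ 2 : ℝ) : ℂ) / ((1 - ‖z₀‖ ^ 2 : ℝ) : ℂ) ^ 2 *
        ((starRingEnd ℂ) z₀ - (starRingEnd ℂ) γ₀ * γ₁) * γ₁ ∧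
      ∀ z ∈ ball (0 : ℂ) 1, f z = T γ₀ (γ₁ * T (-z₀) z) := by
  have hz : ‖z₀‖ < 1 := by simpa using hz₀
  have hg : ‖γ₀‖ < 1 := by simpa using hγ₀
  have hz' : ‖-z₀‖ < 1 := by simpa using hz
  have hg' : ‖-γ₀‖ < 1 := by simpa using hg
  have hm : ∀ z : ℂ, ‖z‖ < 1 → ‖f z‖ < 1 := fun z h => by
    simpa using hf.2 (show z ∈ ball (0 : ℂ) 1 by simpa using h)
  have hfd : ∀ z : ℂ, ‖z‖ < 1 → DifferentiableAt ℂ f z := fun z h =>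
    hf.1.differentiableAt (isOpen_ball.mem_nhds (by simpa using h))
  have hT0 : T z₀ 0 = z₀ := by simp [T]
  have hTg : T (-γ₀) γ₀ = 0 := by simp [T]
  have hTz : T (-z₀) z₀ = 0 := by simp [T]
  have nz := cj_ne hz
  have ng := cj_ne hg
  have hfd0 : deriv f z₀ = γ₁ * (1 - (starRingEnd ℂ) γ₀ * γ₀) / (1 - (starRingEnd ℂ) z₀ * z₀) := by
    rw [H1, hfz₀, cj, cj, div_eq_iff ng] at hH1
    rw [eq_div_iff nz, ← hH1]; ring
  let g : ℂ → ℂ := fun w => T (-γ₀) (f (T z₀ w))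
  have hgd : ∀ w : ℂ, ‖w‖ < 1 → HasDerivAt g
      ((1 - (starRingEnd ℂ) (-γ₀) * (-γ₀)) / (1 + (starRingEnd ℂ) (-γ₀) * f (T z₀ w)) ^ 2 *
        (deriv f (T z₀ w) * ((1 - (starRingEnd ℂ) z₀ * z₀) / (1 + (starRingEnd ℂ) z₀ * w) ^ 2)))
      w := fun w h =>
    HasDerivAt.comp (h := fun w => f (T z₀ w)) (h₂ := T (-γ₀)) w
      (T_deriv hg' (hm _ (T_mem hz h)))
      ((hfd _ (T_mem hz h)).hasDerivAt.comp w (T_deriv hz h))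
  have g0 : g 0 = 0 := by simp only [g, hT0, hfz₀, hTg]
  have gd0 : deriv g 0 = γ₁ := by
    rw [(hgd 0 (by simp)).deriv, hT0, hfz₀, hfd0]
    simp only [map_neg, neg_mul, mul_neg, neg_neg, mul_zero, add_zero, ← sub_eq_add_neg]
    field_simp
  have key := Complex.affine_of_mapsTo_ball_of_norm_dslope_eq_div (f := g) (c := 0) (z₀ := 0)
    (R₁ := 1) (R₂ := 1)
    (fun w h => (hgd w (by simpa using h)).differentiableAt.differentiableWithinAt)
    (fun w h => by
      rw [g0, mem_closedBall_zero_iff]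
      exact (T_mem hg' (hm _ (T_mem hz (by simpa using h)))).le)
    (by simp) (by simp [dslope_same, gd0, hγ₁])
  have main : ∀ z ∈ ball (0 : ℂ) 1, f z = T γ₀ (γ₁ * T (-z₀) z) := by
    intro z h
    have h1 : ‖z‖ < 1 := by simpa using h
    have h2 := T_mem hz' h1
    have h3 := key (show T (-z₀) z ∈ ball (0 : ℂ) 1 by simpa using h2)
    simp only [g0, dslope_same, gd0, sub_zero, zero_add, smul_eq_mul, g, T_inv hz h1] at h3
    rw [mul_comm, ← h3, T_inv hg (hm z h1)]
  refine ⟨?_, main⟩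
  have hd1 : ∀ z ∈ ball (0 : ℂ) 1, deriv f z =
      (1 - (starRingEnd ℂ) γ₀ * γ₀) / (1 + (starRingEnd ℂ) γ₀ * (γ₁ * T (-z₀) z)) ^ 2 *
      (γ₁ * ((1 - (starRingEnd ℂ) (-z₀) * (-z₀)) / (1 + (starRingEnd ℂ) (-z₀) * z) ^ 2)) := by
    intro z h
    have h1 : ‖z‖ < 1 := by simpa using h
    have h2 : ‖γ₁ * T (-z₀) z‖ < 1 := by rw [norm_mul, hγ₁, one_mul]; exact T_mem hz' h1
    have e : f =ᶠ[nhds z] fun z => T γ₀ (γ₁ * T (-z₀) z) :=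
      Filter.eventuallyEq_of_mem (isOpen_ball.mem_nhds h) main
    rw [e.deriv_eq]
    exact ((T_deriv hg h2).comp z ((T_deriv hz' h1).const_mul γ₁)).deriv
  have e := Filter.eventuallyEq_of_mem (isOpen_ball.mem_nhds hz₀) hd1
  rw [iteratedDeriv_succ, iteratedDeriv_one, e.deriv_eq]
  have dT := (((T_deriv hz' hz).const_mul γ₁).const_mul ((starRingEnd ℂ) γ₀)).const_add 1
  have dL := ((hasDerivAt_id z₀).const_mul ((starRingEnd ℂ) (-z₀))).const_add 1
  have n1 : (1 + (starRingEnd ℂ) γ₀ * (γ₁ * T (-z₀) z₀)) ^ 2 ≠ 0 := by simp [hTz]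
  have n2 : (1 + (starRingEnd ℂ) (-z₀) * id z₀) ^ 2 ≠ 0 := pow_ne_zero _ (T_den hz' hz)
  have D := ((hasDerivAt_const z₀ (1 - (starRingEnd ℂ) γ₀ * γ₀)).div (dT.pow 2) n1).mul
    (((hasDerivAt_const z₀ (1 - (starRingEnd ℂ) (-z₀) * (-z₀))).div (dL.pow 2) n2).const_mul γ₁)
  refine D.deriv.trans ?_
  rw [cj, cj]
  simp only [Pi.pow_apply, Pi.div_apply, id, hTz, map_neg, neg_mul, mul_neg, neg_neg, mul_zero, add_zero, ← sub_eq_add_neg]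
  field_simp
  ring
end

section
/- Let z₀, w₀ ∈ 𝔻 with |w₀| < |z₀|, set γ₀ := w₀/z₀, and let γ₁, γ₂ ∈ 𝔻. Then there exists c ∈ ℂ such that the set {h'''(z₀) : h ∈ ℋ, h(0) = 0, and the function f(z) := h(z)/z (extended analytically to 𝔻) satisfies f(z₀) = γ₀, H¹f(z₀) = γ₁, H²f(z₀) = γ₂} is exactly the closed disk centered at c with radius |z₀|·6(1 − |γ₀|²)(1 − |γ₁|²)(1 − |γ₂|²)/(1 − |z₀|²)³. -/
open Complex Metric

/-- The second Peschl invariant derivative `D₂f(z)`. -/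
noncomputable def D2 (f : ℂ → ℂ) (z : ℂ) : ℂ :=
  ((1 - ‖z‖ ^ 2 : ℝ) : ℂ) ^ 2 / ((1 - ‖f z‖ ^ 2 : ℝ) : ℂ) *
    (iteratedDeriv 2 f z - 2 * (starRingEnd ℂ) z * deriv f z / ((1 - ‖z‖ ^ 2 : ℝ) : ℂ) +
      2 * (starRingEnd ℂ) (f z) * (deriv f z) ^ 2 / ((1 - ‖f z‖ ^ 2 : ℝ) : ℂ))

/-- The second-order hyperbolic derivative `H²f(z) = D₂f(z)/(2(1-|H¹f(z)|²))`. -/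
noncomputable def H2 (f : ℂ → ℂ) (z : ℂ) : ℂ :=
  D2 f z / (2 * ((1 - ‖H1 f z‖ ^ 2 : ℝ) : ℂ))

open Filter Topology ComplexConjugate in
lemma ev_hasDerivAt {f : ℂ → ℂ} {z : ℂ} (hf : AnalyticAt ℂ f z) :
    ∀ᶠ w in 𝓝 z, HasDerivAt f (deriv f w) w :=
  hf.eventually_analyticAt.mono fun _ h => h.differentiableAt.hasDerivAt

open Filter Topology ComplexConjugate in
lemma ev_deriv_eq {F G F' G' : ℂ → ℂ} {z : ℂ} (h : ∀ᶠ w in 𝓝 z, F w = G w)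
    (hF : ∀ᶠ w in 𝓝 z, HasDerivAt F (F' w) w) (hG : ∀ᶠ w in 𝓝 z, HasDerivAt G (G' w) w) :
    ∀ᶠ w in 𝓝 z, F' w = G' w := by
  filter_upwards [h.eventually_nhds, hF, hG] with w h1 h2 h3
  exact h2.unique (h3.congr_of_eventuallyEq h1)

open Filter Topology ComplexConjugate in
lemma jets {a z₀ : ℂ} {f g : ℂ → ℂ} (hf : AnalyticAt ℂ f z₀) (hg : AnalyticAt ℂ g z₀)
    (hE : ∀ᶠ z in 𝓝 z₀, (f z - a) * (1 - conj z₀ * z) =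
      (z - z₀) * (g z * (1 - conj a * f z))) (h0 : f z₀ = a) :
    deriv f z₀ * (1 - conj z₀ * z₀) = g z₀ * (1 - conj a * a) ∧
    deriv (deriv f) z₀ * (1 - conj z₀ * z₀) - 2 * conj z₀ * deriv f z₀ =
      2 * (deriv g z₀ * (1 - conj a * a) - conj a * g z₀ * deriv f z₀) ∧
    deriv (deriv (deriv f)) z₀ * (1 - conj z₀ * z₀) - 3 * conj z₀ * deriv (deriv f) z₀ =
      3 * (deriv (deriv g) z₀ * (1 - conj a * a) - 2 * conj a * deriv g z₀ * deriv f z₀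
        - conj a * g z₀ * deriv (deriv f) z₀) := by
  have f0 := ev_hasDerivAt hf
  have f1 := ev_hasDerivAt hf.deriv
  have f2 := ev_hasDerivAt hf.deriv.deriv
  have g0 := ev_hasDerivAt hg
  have g1 := ev_hasDerivAt hg.deriv
  have g2 := ev_hasDerivAt hg.deriv.deriv
  have L1 : ∀ᶠ z in 𝓝 z₀, deriv f z * (1 - conj z₀ * z) - conj z₀ * (f z - a) =
      g z * (1 - conj a * f z) + (z - z₀) * (deriv g z * (1 - conj a * f z)
        - conj a * (g z * deriv f z)) := by
    refine ev_deriv_eq hE ?_ ?_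
    · filter_upwards [f0] with z hz
      refine HasDerivAt.congr_deriv ((hz.sub_const a).mul (((hasDerivAt_id z).const_mul (conj z₀)).const_sub 1)) ?_
      simp; ring
    · filter_upwards [f0, g0] with z hz kz
      refine HasDerivAt.congr_deriv (((hasDerivAt_id z).sub_const z₀).mul
        (kz.mul ((hz.const_mul (conj a)).const_sub 1))) ?_
      simp only [id]; ring
  have L2 : ∀ᶠ z in 𝓝 z₀, deriv (deriv f) z * (1 - conj z₀ * z) - 2 * conj z₀ * deriv f z =
      2 * (deriv g z * (1 - conj a * f z) - conj a * (g z * deriv f z))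
       + (z - z₀) * (deriv (deriv g) z * (1 - conj a * f z) - 2 * conj a * (deriv g z * deriv f z)
        - conj a * (g z * deriv (deriv f) z)) := by
    refine ev_deriv_eq L1 ?_ ?_
    · filter_upwards [f0, f1] with z hz hz1
      refine HasDerivAt.congr_deriv ((hz1.mul (((hasDerivAt_id z).const_mul (conj z₀)).const_sub 1)).sub
        ((hz.sub_const a).const_mul (conj z₀))) ?_
      simp; ring
    · filter_upwards [f0, g0, f1, g1] with z hz kz hz1 kz1
      have e := (hz.const_mul (conj a)).const_sub 1
      refine HasDerivAt.congr_deriv ((kz.mul e).add (((hasDerivAt_id z).sub_const z₀).mul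
        ((kz1.mul e).sub ((kz.mul hz1).const_mul (conj a))))) ?_
      simp; ring
  have L3 : ∀ᶠ z in 𝓝 z₀, deriv (deriv (deriv f)) z * (1 - conj z₀ * z)
       - 3 * conj z₀ * deriv (deriv f) z =
      3 * (deriv (deriv g) z * (1 - conj a * f z) - 2 * conj a * (deriv g z * deriv f z)
        - conj a * (g z * deriv (deriv f) z))
       + (z - z₀) * (deriv (deriv (deriv g)) z * (1 - conj a * f z)
        - 3 * conj a * (deriv (deriv g) z * deriv f z)
        - 3 * conj a * (deriv g z * deriv (deriv f) z)
        - conj a * (g z * deriv (deriv (deriv f)) z)) := by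
    refine ev_deriv_eq L2 ?_ ?_
    · filter_upwards [f1, f2] with z hz hz1
      refine HasDerivAt.congr_deriv ((hz1.mul (((hasDerivAt_id z).const_mul (conj z₀)).const_sub 1)).sub
        (hz.const_mul (2 * conj z₀))) ?_
      simp; ring
    · filter_upwards [f0, g0, f1, g1, f2, g2] with z hz kz hz1 kz1 hz2 kz2
      have e := (hz.const_mul (conj a)).const_sub 1
      refine HasDerivAt.congr_deriv ((((kz1.mul e).sub ((kz.mul hz1).const_mul (conj a))).const_mul 2).add
        (((hasDerivAt_id z).sub_const z₀).mul
        (((kz2.mul e).sub ((kz1.mul hz1).const_mul (2 * conj a))).sub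
          ((kz.mul hz2).const_mul (conj a))))) ?_
      simp; ring
  have e1 := L1.self_of_nhds
  have e2 := L2.self_of_nhds
  have e3 := L3.self_of_nhds
  rw [h0] at e1 e2 e3
  refine ⟨by linear_combination e1, by linear_combination e2, by linear_combination e3⟩

open Filter Topology in
lemma third_deriv {z₀ : ℂ} {f h : ℂ → ℂ} (hf : AnalyticAt ℂ f z₀)
    (hE : ∀ᶠ z in 𝓝 z₀, h z = z * f z) :
    iteratedDeriv 3 h z₀ = z₀ * deriv (deriv (deriv f)) z₀ + 3 * deriv (deriv f) z₀ := by
  have f0 := ev_hasDerivAt hf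
  have f1 := ev_hasDerivAt hf.deriv
  have f2 := ev_hasDerivAt hf.deriv.deriv
  have L1 : deriv h =ᶠ[𝓝 z₀] fun z => f z + z * deriv f z := by
    filter_upwards [hE.eventually_nhds, f0] with z h1 h2
    rw [EventuallyEq.deriv_eq h1]
    refine HasDerivAt.deriv (((hasDerivAt_id z).mul h2).congr_deriv ?_)
    simp
  have L2 : deriv (deriv h) =ᶠ[𝓝 z₀] fun z => 2 * deriv f z + z * deriv (deriv f) z := by
    filter_upwards [L1.eventually_nhds, f0, f1] with z h1 h2 h3
    rw [EventuallyEq.deriv_eq h1]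
    refine HasDerivAt.deriv ?_
    refine HasDerivAt.congr_deriv (h2.add ((hasDerivAt_id z).mul h3)) ?_
    simp; ring
  have e : iteratedDeriv 3 h = deriv (deriv (deriv h)) := by
    simp [iteratedDeriv_succ, iteratedDeriv_zero]
  rw [e, L2.deriv_eq]
  refine HasDerivAt.deriv ?_
  refine HasDerivAt.congr_deriv ((f1.self_of_nhds.const_mul 2).add ((hasDerivAt_id z₀).mul f2.self_of_nhds)) ?_
  simp; ring

open ComplexConjugate in
lemma one_sub_ne {a z : ℂ} (ha : ‖a‖ < 1) (hz : ‖z‖ ≤ 1) : 1 - conj a * z ≠ 0 := by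
  intro h
  have h1 : conj a * z = 1 := by linear_combination -h
  have h2 : ‖a‖ * ‖z‖ = 1 := by
    rw [← RCLike.norm_conj a, ← norm_mul]; simpa using congrArg norm h1
  nlinarith [norm_nonneg a, norm_nonneg z]

open ComplexConjugate in
lemma norm_mob {a z : ℂ} (ha : ‖a‖ < 1) (hz : ‖z‖ < 1) :
    ‖(z - a) / (1 - conj a * z)‖ < 1 := by
  rw [norm_div, div_lt_one (norm_pos_iff.2 (one_sub_ne ha hz.le))]
  have k : ‖1 - conj a * z‖ ^ 2 - ‖z - a‖ ^ 2 = (1 - ‖a‖ ^ 2) * (1 - ‖z‖ ^ 2) := by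
    simp only [← Complex.normSq_eq_norm_sq, Complex.normSq_apply]
    simp
    ring
  have : 0 < (1 - ‖a‖ ^ 2) * (1 - ‖z‖ ^ 2) := by
    apply mul_pos <;> nlinarith [norm_nonneg a, norm_nonneg z]
  exact lt_of_pow_lt_pow_left₀ 2 (norm_nonneg _) (by linarith)

open ComplexConjugate in
lemma schur_step {z₀ a : ℂ} {f : ℂ → ℂ} (hz₀ : ‖z₀‖ < 1)
    (hf : DifferentiableOn ℂ f (ball 0 1)) (hm : Set.MapsTo f (ball 0 1) (ball 0 1))
    (h0 : f z₀ = a) :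
    ∃ g : ℂ → ℂ, DifferentiableOn ℂ g (ball 0 1) ∧ Set.MapsTo g (ball 0 1) (closedBall 0 1) ∧
      ∀ z ∈ ball (0 : ℂ) 1, (f z - a) * (1 - conj z₀ * z) =
      (z - z₀) * (g z * (1 - conj a * f z)) := by
  have ha : ‖a‖ < 1 := by
    have := hm (show z₀ ∈ ball (0:ℂ) 1 by simpa using hz₀)
    simpa [h0] using this
  have mobd : ∀ b : ℂ, ‖b‖ < 1 →
      DifferentiableOn ℂ (fun z => (z - b) / (1 - conj b * z)) (ball 0 1) := by
    intro b hb
    refine DifferentiableOn.div (by fun_prop) (by fun_prop) ?_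
    intro z hz
    exact one_sub_ne hb (by simpa using (mem_ball_zero_iff.1 hz).le)
  have mobm : ∀ b : ℂ, ‖b‖ < 1 →
      Set.MapsTo (fun z => (z - b) / (1 - conj b * z)) (ball 0 1) (ball 0 1) := by
    intro b hb z hz
    exact mem_ball_zero_iff.2 (norm_mob hb (mem_ball_zero_iff.1 hz))
  have hz₀' : ‖-z₀‖ < 1 := by simpa using hz₀
  obtain ⟨F, hF⟩ : ∃ F : ℂ → ℂ, F = (fun z => (z - a) / (1 - conj a * z)) ∘ f ∘
      (fun z => (z - -z₀) / (1 - conj (-z₀) * z)) := ⟨_, rfl⟩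
  have Fd : DifferentiableOn ℂ F (ball 0 1) := by
    rw [hF]
    exact (mobd a ha).comp (hf.comp (mobd _ hz₀') (mobm _ hz₀')) (hm.comp (mobm _ hz₀'))
  have Fm : Set.MapsTo F (ball 0 1) (ball 0 1) := by
    rw [hF]
    exact (mobm a ha).comp (hm.comp (mobm _ hz₀'))
  have F0 : F 0 = 0 := by simp [hF, h0]
  have Gd : DifferentiableOn ℂ (dslope F 0) (ball 0 1) :=
    (differentiableOn_dslope (isOpen_ball.mem_nhds (mem_ball_self one_pos))).2 Fd
  have Gm : ∀ z ∈ ball (0:ℂ) 1, ‖dslope F 0 z‖ ≤ 1 := by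
    intro z hz
    have := norm_dslope_le_div_of_mapsTo_ball (R₂ := 1) Fd
      (by rw [F0]; exact Fm.mono_right ball_subset_closedBall) hz
    simpa using this
  refine ⟨fun z => dslope F 0 ((z - z₀) / (1 - conj z₀ * z)), ?_, ?_, ?_⟩
  · exact Gd.comp (mobd _ hz₀) (mobm _ hz₀)
  · intro z hz
    exact mem_closedBall_zero_iff.2 (Gm _ (mobm _ hz₀ hz))
  · intro z hz
    have hz1 := mem_ball_zero_iff.1 hz
    have d1 := one_sub_ne hz₀ hz1.le
    have d2 := one_sub_ne ha (mem_ball_zero_iff.1 (hm hz)).le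
    have d3 := one_sub_ne hz₀ hz₀.le
    have hi := inv_mul_cancel₀ d1
    have key := sub_smul_dslope F 0 ((z - z₀) / (1 - conj z₀ * z))
    have inv : ((z - z₀) / (1 - conj z₀ * z) - -z₀) /
        (1 - conj (-z₀) * ((z - z₀) / (1 - conj z₀ * z))) = z := by
      have e1 : (z - z₀) / (1 - conj z₀ * z) - -z₀ =
        z * (1 - conj z₀ * z₀) / (1 - conj z₀ * z) := by
        linear_combination (-z₀) * hi
      have e2 : 1 - conj (-z₀) * ((z - z₀) / (1 - conj z₀ * z)) =
        (1 - conj z₀ * z₀) / (1 - conj z₀ * z) := by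
        rw [map_neg]; linear_combination (-1) * hi
      rw [e1, e2, div_div_div_cancel_right₀ d1, mul_div_cancel_right₀ _ d3]
    have hFz : F ((z - z₀) / (1 - conj z₀ * z)) = (f z - a) / (1 - conj a * f z) := by
      rw [hF]; simp only [Function.comp]; rw [inv]
    rw [F0, hFz, smul_eq_mul, sub_zero, sub_zero, eq_div_iff d2] at key
    simp only
    generalize dslope F 0 ((z - z₀) / (1 - conj z₀ * z)) = G at key ⊢
    rw [← key]; linear_combination (z - z₀) * G * (1 - conj a * f z) * hi

lemma open_of_closed {z₀ : ℂ} {g : ℂ → ℂ} (hz₀ : z₀ ∈ ball (0:ℂ) 1)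
    (hg : DifferentiableOn ℂ g (ball 0 1)) (hm : Set.MapsTo g (ball 0 1) (closedBall 0 1))
    (h0 : ‖g z₀‖ < 1) : Set.MapsTo g (ball 0 1) (ball 0 1) := by
  intro z hz
  by_contra hc
  have hz1 : ‖g z‖ = 1 := le_antisymm (by simpa using hm hz) (by simpa using hc)
  have := eqOn_of_isPreconnected_of_isMaxOn_norm (convex_ball (0:ℂ) 1).isPreconnected isOpen_ball
    hg hz (by intro w hw; simpa [hz1] using hm hw) hz₀
  simp only [Function.const] at this
  rw [this, hz1] at h0
  exact lt_irrefl _ h0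

open ComplexConjugate in
lemma inv_step {z₀ a : ℂ} {g : ℂ → ℂ} (hz₀ : ‖z₀‖ < 1) (ha : ‖a‖ < 1)
    (hg : DifferentiableOn ℂ g (ball 0 1)) (hm : Set.MapsTo g (ball 0 1) (closedBall 0 1)) :
    ∃ f : ℂ → ℂ, DifferentiableOn ℂ f (ball 0 1) ∧ Set.MapsTo f (ball 0 1) (ball 0 1) ∧
      f z₀ = a ∧ ∀ z ∈ ball (0 : ℂ) 1, (f z - a) * (1 - conj z₀ * z) =
      (z - z₀) * (g z * (1 - conj a * f z)) := by
  have ha' : ‖-a‖ < 1 := by simpa using ha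
  have hb : ∀ z ∈ ball (0:ℂ) 1, ‖(z - z₀) / (1 - conj z₀ * z) * g z‖ < 1 := by
    intro z hz
    have h1 := norm_mob hz₀ (mem_ball_zero_iff.1 hz)
    have h2 : ‖g z‖ ≤ 1 := by simpa using hm hz
    rw [norm_mul]
    nlinarith [norm_nonneg ((z - z₀) / (1 - conj z₀ * z)), norm_nonneg (g z)]
  have hq : ∀ z ∈ ball (0:ℂ) 1, 1 - conj z₀ * z ≠ 0 := fun z hz =>
    one_sub_ne hz₀ (mem_ball_zero_iff.1 hz).le
  refine ⟨fun z => ((z - z₀) / (1 - conj z₀ * z) * g z - -a) /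
    (1 - conj (-a) * ((z - z₀) / (1 - conj z₀ * z) * g z)), ?_, ?_, ?_, ?_⟩
  · have : DifferentiableOn ℂ (fun z => (z - z₀) / (1 - conj z₀ * z) * g z) (ball 0 1) :=
      (DifferentiableOn.div (by fun_prop) (by fun_prop) hq).mul hg
    exact DifferentiableOn.div (this.sub_const _) ((this.const_mul _).const_sub _)
      fun z hz => one_sub_ne ha' (hb z hz).le
  · intro z hz
    exact mem_ball_zero_iff.2 (norm_mob ha' (hb z hz))
  · simp
  · intro z hz
    have d := one_sub_ne ha' (hb z hz).le
    have e : (z - z₀) = (z - z₀) / (1 - conj z₀ * z) * (1 - conj z₀ * z) := by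
      rw [div_mul_cancel₀ _ (hq z hz)]
    simp only
    generalize hB : (z - z₀) / (1 - conj z₀ * z) = B at d e ⊢
    rw [e]
    rw [map_neg] at d ⊢
    have hi := inv_mul_cancel₀ d
    linear_combination (B * g z + a) * (1 - conj z₀ * z) * hi

open ComplexConjugate in
lemma cast_q (z : ℂ) : ((1 - ‖z‖ ^ 2 : ℝ) : ℂ) = 1 - conj z * z := by
  rw [Complex.conj_mul']; push_cast; rfl

open ComplexConjugate in
lemma H_rel {z₀ a : ℂ} {f g : ℂ → ℂ} (hz₀ : ‖z₀‖ < 1) (ha : ‖a‖ < 1) (h0 : f z₀ = a)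
    (e1 : deriv f z₀ * (1 - conj z₀ * z₀) = g z₀ * (1 - conj a * a))
    (e2 : deriv (deriv f) z₀ * (1 - conj z₀ * z₀) - 2 * conj z₀ * deriv f z₀ =
      2 * (deriv g z₀ * (1 - conj a * a) - conj a * g z₀ * deriv f z₀)) :
    H1 f z₀ = g z₀ ∧ H2 f z₀ = H1 g z₀ := by
  have dq := one_sub_ne hz₀ hz₀.le
  have da := one_sub_ne ha ha.le
  have h1 : H1 f z₀ = g z₀ := by
    rw [H1, cast_q, cast_q, h0, div_eq_iff da]; linear_combination e1
  refine ⟨h1, ?_⟩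
  have h2 : D2 f z₀ = 2 * ((1 - conj z₀ * z₀) * deriv g z₀) := by
    have it : iteratedDeriv 2 f z₀ = deriv (deriv f) z₀ := by
      simp [iteratedDeriv_succ, iteratedDeriv_zero]
    have hf1 : deriv f z₀ = g z₀ * (1 - conj a * a) / (1 - conj z₀ * z₀) := by
      rw [eq_div_iff dq, e1]
    have hf2 : deriv (deriv f) z₀ = (2 * (deriv g z₀ * (1 - conj a * a)
        - conj a * g z₀ * deriv f z₀) + 2 * conj z₀ * deriv f z₀) / (1 - conj z₀ * z₀) := by
      rw [eq_div_iff dq]; linear_combination e2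
    rw [D2, cast_q, cast_q, h0, it, hf2, hf1]
    generalize conj z₀ = x at *
    generalize conj a = y at *
    field_simp
    ring
  rw [H2, h2, h1, H1, cast_q z₀, mul_div_mul_left _ _ two_ne_zero]

noncomputable def ctr (z x a y b v c : ℂ) : ℂ :=
       let q := 1 - x * z
       let F1 := b * (1 - y * a) / q
       let G1 := c * (1 - v * b) / q
       let F2 := (2 * (G1 * (1 - y * a) - y * b * F1) + 2 * x * F1) / q
       let G2 := (2 * (- v * c * G1) + 2 * x * G1) / q
       let F3 := (3 * (G2 * (1 - y * a) - 2 * y * G1 * F1 - y * b * F2) + 3 * x * F2) / q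
       z * F3 + 3 * F2

open ComplexConjugate in
lemma final_alg {z x a y b v c u f1 f2 f3 g1 g2 k1 t : ℂ} (hq : 1 - x * z ≠ 0)
    (e1 : f1 * (1 - x * z) = b * (1 - y * a))
    (e2 : f2 * (1 - x * z) - 2 * x * f1 = 2 * (g1 * (1 - y * a) - y * b * f1))
    (e3 : f3 * (1 - x * z) - 3 * x * f2 =
      3 * (g2 * (1 - y * a) - 2 * y * g1 * f1 - y * b * f2))
    (e4 : g1 * (1 - x * z) = c * (1 - v * b))
    (e5 : g2 * (1 - x * z) - 2 * x * g1 = 2 * (k1 * (1 - v * b) - v * c * g1))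
    (e6 : k1 * (1 - x * z) = t * (1 - u * c)) :
    z * f3 + 3 * f2 =
      ctr z x a y b v c +
      z * (6 * (1 - y * a) * (1 - v * b) * (1 - u * c) / (1 - x * z) ^ 3) * t := by
  simp only [ctr]
  generalize 1 - x * z = q at *
  have h1 : f1 = b * (1 - y * a) / q := by rw [eq_div_iff hq, e1]
  have h4 : g1 = c * (1 - v * b) / q := by rw [eq_div_iff hq, e4]
  have h6 : k1 = t * (1 - u * c) / q := by rw [eq_div_iff hq, e6]
  have h2 : f2 = (2 * (g1 * (1 - y * a) - y * b * f1) + 2 * x * f1) / q := by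
    rw [eq_div_iff hq]; linear_combination e2
  have h5 : g2 = (2 * (- v * c * g1) + 2 * x * g1) / q +
      2 * (k1 * (1 - v * b)) / q := by
    rw [← add_div, eq_div_iff hq]; linear_combination e5
  have h3 : f3 = (3 * (g2 * (1 - y * a) - 2 * y * g1 * f1 - y * b * f2) + 3 * x * f2) /
      q := by
    rw [eq_div_iff hq]; linear_combination e3
  rw [← h1, ← h4, ← h2, h3, h5, h6]
  field_simp
  ring

/-- Dieudonné's Lemma of the third derivative: with `γ₀ = w₀/z₀`, the variability region
of `h'''(z₀)` over all `h ∈ ℋ` with `h(0) = 0` whose analytic quotient `f(z) = h(z)/z`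
satisfies `f(z₀) = γ₀`, `H¹f(z₀) = γ₁`, `H²f(z₀) = γ₂` is a closed disk of radius
`|z₀|·6(1-|γ₀|²)(1-|γ₁|²)(1-|γ₂|²)/(1-|z₀|²)³`. -/
theorem dieudonne_third_variability (z₀ w₀ γ₀ γ₁ γ₂ : ℂ)
    (hz₀ : z₀ ∈ ball (0 : ℂ) 1) (hw₀ : w₀ ∈ ball (0 : ℂ) 1)
    (hlt : ‖w₀‖ < ‖z₀‖) (hγ₀ : γ₀ = w₀ / z₀)
    (hγ₁ : γ₁ ∈ ball (0 : ℂ) 1) (hγ₂ : γ₂ ∈ ball (0 : ℂ) 1) :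
    ∃ c : ℂ,
      {w : ℂ | ∃ h f : ℂ → ℂ, Hclass h ∧ h 0 = 0 ∧
          DifferentiableOn ℂ f (ball (0 : ℂ) 1) ∧
          (∀ z ∈ ball (0 : ℂ) 1, z ≠ 0 → f z = h z / z) ∧
          f z₀ = γ₀ ∧ H1 f z₀ = γ₁ ∧ H2 f z₀ = γ₂ ∧
          iteratedDeriv 3 h z₀ = w} =
        closedBall c
          (‖z₀‖ * (6 * (1 - ‖γ₀‖ ^ 2) * (1 - ‖γ₁‖ ^ 2) * (1 - ‖γ₂‖ ^ 2) /
            (1 - ‖z₀‖ ^ 2) ^ 3)) := by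
  have hz1 : ‖z₀‖ < 1 := mem_ball_zero_iff.1 hz₀
  have hzpos : 0 < ‖z₀‖ := lt_of_le_of_lt (norm_nonneg _) hlt
  have hz0 : z₀ ≠ 0 := norm_pos_iff.1 hzpos
  have h0 : ‖γ₀‖ < 1 := by rw [hγ₀, norm_div, div_lt_one hzpos]; exact hlt
  have h1 : ‖γ₁‖ < 1 := mem_ball_zero_iff.1 hγ₁
  have h2 : ‖γ₂‖ < 1 := mem_ball_zero_iff.1 hγ₂
  have dq := one_sub_ne hz1 hz1.le
  have hnb : ball (0:ℂ) 1 ∈ nhds z₀ := isOpen_ball.mem_nhds hz₀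
  have an : ∀ {f : ℂ → ℂ}, DifferentiableOn ℂ f (ball 0 1) → AnalyticAt ℂ f z₀ :=
    fun hf => hf.analyticAt hnb
  set K : ℂ := z₀ * (6 * (1 - (starRingEnd ℂ) γ₀ * γ₀) * (1 - (starRingEnd ℂ) γ₁ * γ₁) *
    (1 - (starRingEnd ℂ) γ₂ * γ₂) / (1 - (starRingEnd ℂ) z₀ * z₀) ^ 3) with hK
  have nq : ∀ z : ℂ, ‖z‖ < 1 → ‖1 - (starRingEnd ℂ) z * z‖ = 1 - ‖z‖ ^ 2 := by
    intro z hz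
    rw [← cast_q, Complex.norm_real, Real.norm_of_nonneg]
    nlinarith [norm_nonneg z]
  have hKn : ‖K‖ = ‖z₀‖ * (6 * (1 - ‖γ₀‖ ^ 2) * (1 - ‖γ₁‖ ^ 2) * (1 - ‖γ₂‖ ^ 2) /
            (1 - ‖z₀‖ ^ 2) ^ 3) := by
    rw [hK]
    simp only [norm_mul, norm_div, norm_pow, nq _ h0, nq _ h1, nq _ h2, nq _ hz1]
    norm_num
  have hK0 : K ≠ 0 := by
    rw [hK]
    exact mul_ne_zero hz0 (div_ne_zero (mul_ne_zero (mul_ne_zero (mul_ne_zero (by norm_num)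
      (one_sub_ne h0 h0.le)) (one_sub_ne h1 h1.le)) (one_sub_ne h2 h2.le)) (pow_ne_zero _ dq))
  rw [← hKn]
  refine ⟨ctr z₀ ((starRingEnd ℂ) z₀) γ₀ ((starRingEnd ℂ) γ₀) γ₁ ((starRingEnd ℂ) γ₁) γ₂,
    Set.ext fun w => ⟨?_, ?_⟩⟩
  · rintro ⟨h, f, hh, hh0, hfd, hfh, hf0, hH1, hH2, rfl⟩
    have hhf : ∀ z ∈ ball (0:ℂ) 1, h z = z * f z := by
      intro z hz
      rcases eq_or_ne z 0 with rfl | hne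
      · simp [hh0]
      · rw [hfh z hz hne]; field_simp
    have hfc : Set.MapsTo f (ball 0 1) (closedBall 0 1) := by
      intro z hz
      rw [mem_closedBall_zero_iff]
      rcases eq_or_ne z 0 with rfl | hne
      · have hd : HasDerivAt h (f 0) 0 := by
          have e := (hasDerivAt_id (0:ℂ)).mul
            (hfd.differentiableAt (isOpen_ball.mem_nhds hz)).hasDerivAt
          have e' := e.congr_of_eventuallyEq (f₁ := h)
            (Filter.eventually_of_mem (isOpen_ball.mem_nhds hz) hhf)
          simpa using e'
        rw [← hd.deriv]
        exact Complex.norm_deriv_le_one_of_mapsTo_ball hh.1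
          (by rw [hh0]; exact hh.2.mono_right ball_subset_closedBall) one_pos
      · rw [hfh z hz hne, norm_div, div_le_one (norm_pos_iff.2 hne)]
        exact Complex.norm_le_norm_of_mapsTo_ball hh.1
          (hh.2.mono_right ball_subset_closedBall) hh0 (mem_ball_zero_iff.1 hz)
    have hfm := open_of_closed hz₀ hfd hfc (by rw [hf0]; exact h0)
    obtain ⟨g, gd, gc, gE⟩ := schur_step hz1 hfd hfm hf0
    obtain ⟨e1, e2, e3⟩ := jets (an hfd) (an gd) (Filter.eventually_of_mem hnb gE) hf0
    obtain ⟨r1, r2⟩ := H_rel hz1 h0 hf0 e1 e2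
    have hg0 : g z₀ = γ₁ := by rw [← r1, hH1]
    have gm := open_of_closed hz₀ gd gc (by rw [hg0]; exact h1)
    obtain ⟨k, kd, kc, kE⟩ := schur_step hz1 gd gm hg0
    obtain ⟨e4, e5, e6⟩ := jets (an gd) (an kd) (Filter.eventually_of_mem hnb kE) hg0
    obtain ⟨r3, r4⟩ := H_rel hz1 h1 hg0 e4 e5
    have hk0 : k z₀ = γ₂ := by rw [← r3, ← r2, hH2]
    have km := open_of_closed hz₀ kd kc (by rw [hk0]; exact h2)
    obtain ⟨l, ld, lc, lE⟩ := schur_step hz1 kd km hk0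
    obtain ⟨e7, -, -⟩ := jets (an kd) (an ld) (Filter.eventually_of_mem hnb lE) hk0
    rw [third_deriv (an hfd) (Filter.eventually_of_mem hnb hhf)]
    rw [hg0] at e1 e2 e3
    rw [hk0] at e4 e5
    rw [final_alg dq e1 e2 e3 e4 e5 e7, mem_closedBall, dist_eq_norm, add_sub_cancel_left, norm_mul]
    have : ‖l z₀‖ ≤ 1 := by simpa using lc hz₀
    exact mul_le_of_le_one_right (norm_nonneg _) this
  · intro hw
    rw [mem_closedBall, dist_eq_norm] at hw
    have ht := (div_le_one (norm_pos_iff.2 hK0)).2 hw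
    rw [← norm_div] at ht
    generalize htd : (w - ctr z₀ ((starRingEnd ℂ) z₀) γ₀ ((starRingEnd ℂ) γ₀) γ₁
      ((starRingEnd ℂ) γ₁) γ₂) / K = t at ht
    replace htd := htd.symm
    rw [eq_div_iff hK0] at htd
    have lc : Set.MapsTo (fun _ : ℂ => t) (ball 0 1) (closedBall 0 1) := by
      intro z hz; simpa using ht
    have ld : DifferentiableOn ℂ (fun _ : ℂ => t) (ball 0 1) := differentiableOn_const t
    obtain ⟨k, kd, km, hk0, kE⟩ := inv_step hz1 h2 ld lc
    obtain ⟨g, gd, gm, hg0, gE⟩ := inv_step hz1 h1 kd (km.mono_right ball_subset_closedBall)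
    obtain ⟨f, fd, fm, hf0, fE⟩ := inv_step hz1 h0 gd (gm.mono_right ball_subset_closedBall)
    obtain ⟨e1, e2, e3⟩ := jets (an fd) (an gd) (Filter.eventually_of_mem hnb fE) hf0
    obtain ⟨r1, r2⟩ := H_rel hz1 h0 hf0 e1 e2
    obtain ⟨e4, e5, e6⟩ := jets (an gd) (an kd) (Filter.eventually_of_mem hnb gE) hg0
    obtain ⟨r3, r4⟩ := H_rel hz1 h1 hg0 e4 e5
    obtain ⟨e7, -, -⟩ := jets (an kd) (an ld) (Filter.eventually_of_mem hnb kE) hk0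
    rw [hg0] at e1 e2 e3
    rw [hk0] at e4 e5
    refine ⟨fun z => z * f z, f, ⟨differentiableOn_id.mul fd, ?_⟩, by simp, fd, ?_, hf0,
      by rw [r1, hg0], by rw [r2, r3, hk0], ?_⟩
    · intro z hz
      have a1 := mem_ball_zero_iff.1 hz
      have a2 := mem_ball_zero_iff.1 (fm hz)
      rw [mem_ball_zero_iff, norm_mul]
      nlinarith [norm_nonneg z, norm_nonneg (f z)]
    · intro z hz hne
      field_simp
    · rw [third_deriv (an fd) (Filter.Eventually.of_forall fun z => rfl),
        final_alg dq e1 e2 e3 e4 e5 e7]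
      linear_combination htd
end
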